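/- There exists δ > 0 such that for every s ≥ 7, every A with 7/20 ≤ A ≤ 1 − 1/Q, and every z with 0 ≤ z ≤ 1/(2Q): OPT(1, A, A, 1, 1/(2Q)+z, 1/(2Q)−z, s) ≤ 3 − δ. -/

import Mathlib

/-- `q(x) = exp(x) - x - 1`. -/
noncomputable def q (x : ℝ) : ℝ := Real.exp x - x - 1

/-- `Q(x) = x·(exp(x) − 1)/(exp(x) − x − 1)`. -/
noncomputable def Qf (x : ℝ) : ℝ := x * (Real.exp x - 1) / (Real.exp x - x - 1)

/-- `OPT(x₀,x₁,x₂,y₀,y₁,y₂,s) = OPT1 · OPT2 · OPT3` with `Q = Q(s)`. -/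
noncomputable def OPT (x₀ x₁ x₂ y₀ y₁ y₂ s : ℝ) : ℝ :=
  ((q (s*x₀) + q (s*x₁) + q (s*x₂)) / q s) *
  (1 / (x₀*y₀ + x₁*y₁ + x₂*y₂)) ^ (Qf s) *
  ((y₀+y₁+y₂) ^ (Qf s) +
    2 * (y₀^2 + y₁^2 + y₂^2 - y₀*y₁ - y₀*y₂ - y₁*y₂) ^ (Qf s / 2))

/-!
Write `Q = Qf s`, which satisfies `Q ≥ s ≥ 7`. On `(0, s]` the logarithmic derivative of `q` is at
least its value `Q / s` at `s`, since `exp` lies below its chords; hence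
`q (s A) ≤ q s · exp (-Q (1 - A))`. At the given point the sums `∑ xᵢ yᵢ = 1 + A / Q` and
`∑ yᵢ = 1 + 1 / Q` do not depend on `z`, and the quadratic form in the `yᵢ` is largest at
`z = 1 / (2 Q)`, so `OPT` is bounded by a function of `Q` and `A` alone. As a function of `A` this
bound is a sum of exponentials of convex functions, hence convex, and it suffices to estimate it at
the endpoints `A = 7 / 20` and `A = 1 - 1 / Q`. The second one is tight: at `Q = 7` the bound
is about `2.977`.
-/

open Real Set

lemma exp_natCast_div_le {p n : ℕ} {b : ℝ} (hn : n ≠ 0) (hb : 0 ≤ b)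
    (h : (2.7182818286 : ℝ) ^ p ≤ b ^ n) : exp (p / n) ≤ b := by
  refine le_of_pow_le_pow_left₀ hn hb ?_
  calc exp (p / n) ^ n = exp 1 ^ p := by
        rw [← exp_nat_mul, exp_one_pow, mul_div_cancel₀ _ (Nat.cast_ne_zero.2 hn)]
    _ ≤ 2.7182818286 ^ p := by gcongr; exact exp_one_lt_d9.le
    _ ≤ b ^ n := h

lemma exp_neg_natCast_div_le {p n : ℕ} {b : ℝ} (hn : n ≠ 0) (hb : 0 ≤ b)
    (h : 1 ≤ b ^ n * (2.7182818283 : ℝ) ^ p) : exp (-(p / n)) ≤ b := by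
  refine le_of_pow_le_pow_left₀ hn hb ?_
  calc exp (-(p / n)) ^ n = (exp 1 ^ p)⁻¹ := by
        rw [← exp_nat_mul, exp_one_pow, mul_neg, mul_div_cancel₀ _ (Nat.cast_ne_zero.2 hn), exp_neg]
    _ ≤ (2.7182818283 ^ p)⁻¹ := by gcongr; exact exp_one_gt_d9.le
    _ ≤ b ^ n := (inv_le_iff_one_le_mul₀ (by positivity)).2 h

lemma convexOn_exp_comp {E : Type*} [AddCommMonoid E] [Module ℝ E] {S : Set E} {f : E → ℝ}
    (hf : ConvexOn ℝ S f) : ConvexOn ℝ S fun x ↦ exp (f x) :=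
  ⟨hf.1, fun _ hx _ hy _ _ ha hb hab ↦
    (exp_le_exp.2 (hf.2 hx hy ha hb hab)).trans (convexOn_exp.2 trivial trivial ha hb hab)⟩

lemma concaveOn_log_one_add_div {c : ℝ} (hc : 0 ≤ c) :
    ConcaveOn ℝ (Ici 0) fun x ↦ log (1 + x / c) := by
  have hcomp := strictConcaveOn_log_Ioi.concaveOn.comp_affineMap (AffineMap.lineMap 1 (1 + 1 / c))
  refine (hcomp.subset (fun x hx ↦ ?_) (convex_Ici 0)).congr fun x _ ↦ ?_
  · have hx : 0 ≤ x := hx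
    simp only [mem_preimage, AffineMap.lineMap_apply_ring', mem_Ioi]
    ring_nf
    positivity
  · simp only [Function.comp_apply, AffineMap.lineMap_apply_ring']
    ring_nf

lemma one_add_inv_div_one_add_div_rpow_le {Q A : ℝ} (hQ : 0 < Q) (hA : 0 ≤ A) :
    ((1 + 1 / Q) / (1 + A / Q)) ^ Q ≤ exp ((1 - A) / (1 + A / Q)) := by
  have hbase : (1 + 1 / Q) / (1 + A / Q) = (1 - A) / (1 + A / Q) / Q + 1 := by
    have : Q + A ≠ 0 := by positivity
    field_simp
    ring
  calc ((1 + 1 / Q) / (1 + A / Q)) ^ Q ≤ exp ((1 - A) / (1 + A / Q) / Q) ^ Q := by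
        refine rpow_le_rpow (by positivity) ?_ hQ.le
        exact hbase.trans_le (add_one_le_exp _)
    _ = exp ((1 - A) / (1 + A / Q)) := by rw [← exp_mul, div_mul_cancel₀ _ hQ.ne']

lemma one_add_div_rpow_neg_le {Q A : ℝ} (hQ : 0 < Q) (hA : 0 ≤ A) :
    (1 + A / Q) ^ (-Q) ≤ exp (-A + A ^ 2 / (2 * Q)) := by
  rw [rpow_def_of_pos (by positivity), exp_le_exp]
  have hlog : A - A ^ 2 / (2 * Q) ≤ Q * log (1 + A / Q) := calc
    A - A ^ 2 / (2 * Q) ≤ A - A ^ 2 / (2 * Q + A) := by gcongr; linarith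
    _ = Q * (2 * (A / Q) / (A / Q + 2)) := by
      have : A + 2 * Q ≠ 0 := by positivity
      field_simp
      ring
    _ ≤ Q * log (1 + A / Q) := by gcongr; exact le_log_one_add_of_nonneg (by positivity)
  linarith

lemma q_pos {x : ℝ} (hx : x ≠ 0) : 0 < q x := by
  have := add_one_lt_exp hx
  unfold q
  linarith

lemma hasDerivAt_q (x : ℝ) : HasDerivAt q (exp x - 1) x :=
  ((hasDerivAt_exp x).sub (hasDerivAt_id x)).sub_const 1

lemma Qf_eq (s : ℝ) : Qf s = s * (exp s - 1) / q s := rfl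

lemma le_Qf {s : ℝ} (hs : 0 < s) : s ≤ Qf s := by
  rw [Qf_eq, le_div_iff₀ (q_pos hs.ne')]
  unfold q
  nlinarith

lemma Qf_div_mul_q_le {x s : ℝ} (hx : x ∈ Ioo 0 s) : Qf s / s * q x ≤ exp x - 1 := by
  have hs : 0 < s := hx.1.trans hx.2
  have hchord : s * (exp x - 1) ≤ x * (exp s - 1) := by
    have := convexOn_exp.secant_mono_aux1 (mem_univ 0) (mem_univ s) hx.1 hx.2
    rw [exp_zero] at this
    linarith
  have hcross : (exp s - 1) * q x ≤ (exp x - 1) * q s := by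
    unfold q
    linarith
  calc Qf s / s * q x = (exp s - 1) * q x / q s := by rw [Qf_eq]; field_simp
    _ ≤ exp x - 1 := (div_le_iff₀ (q_pos hs.ne')).2 hcross

lemma monotoneOn_q_mul_exp_neg (s : ℝ) :
    MonotoneOn (fun x ↦ q x * exp (-(Qf s / s * x))) (Icc 0 s) := by
  have hderiv (x : ℝ) : HasDerivAt (fun x ↦ q x * exp (-(Qf s / s * x)))
      ((exp x - 1 - Qf s / s * q x) * exp (-(Qf s / s * x))) x :=
    ((hasDerivAt_q x).mul ((hasDerivAt_id x).const_mul (Qf s / s)).neg.exp).congr_deriv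
      (by simp only [id_eq, Pi.neg_apply]; ring)
  refine monotoneOn_of_hasDerivWithinAt_nonneg (convex_Icc 0 s)
    (fun x _ ↦ (hderiv x).continuousAt.continuousWithinAt)
    (fun x _ ↦ (hderiv x).hasDerivWithinAt) fun x hx ↦ ?_
  rw [interior_Icc] at hx
  exact mul_nonneg (sub_nonneg.2 (Qf_div_mul_q_le hx)) (exp_pos _).le

lemma q_mul_le {s A : ℝ} (hs : 0 < s) (hA : A ∈ Icc 0 1) :
    q (s * A) ≤ q s * exp (-(Qf s * (1 - A))) := by
  have hsA : s * A ≤ s := mul_le_of_le_one_right hs.le hA.2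
  have hmono : q (s * A) * exp (-(Qf s * A)) ≤ q s * exp (-Qf s) := by
    have := monotoneOn_q_mul_exp_neg s ⟨mul_nonneg hs.le hA.1, hsA⟩ ⟨hs.le, le_rfl⟩ hsA
    simpa only [← mul_assoc, div_mul_cancel₀ _ hs.ne'] using this
  calc q (s * A) = q (s * A) * exp (-(Qf s * A)) * exp (Qf s * A) := by
        rw [mul_assoc, ← exp_add, neg_add_cancel, exp_zero, mul_one]
    _ ≤ q s * exp (-Qf s) * exp (Qf s * A) := by gcongr
    _ = q s * exp (-(Qf s * (1 - A))) := by
        rw [mul_assoc, ← exp_add]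
        ring_nf

lemma one_sub_sq_add_three_mul_sq_rpow_le {Q z : ℝ} (hQ : 0 < Q) (hz : |z| ≤ 1 / (2 * Q)) :
    ((1 - 1 / (2 * Q)) ^ 2 + 3 * z ^ 2) ^ (Q / 2) ≤ exp (-((1 - 1 / Q) / 2)) := by
  have hbase : (1 - 1 / (2 * Q)) ^ 2 + 3 * z ^ 2 ≤ exp (-(1 / Q - (1 / Q) ^ 2)) := calc
    _ ≤ (1 - 1 / (2 * Q)) ^ 2 + 3 * (1 / (2 * Q)) ^ 2 := by
      gcongr _ + 3 * ?_
      exact sq_le_sq' (abs_le.1 hz).1 (abs_le.1 hz).2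
    _ = -(1 / Q - (1 / Q) ^ 2) + 1 := by ring
    _ ≤ _ := add_one_le_exp _
  calc _ ≤ exp (-(1 / Q - (1 / Q) ^ 2)) ^ (Q / 2) := by gcongr
    _ = exp (-((1 - 1 / Q) / 2)) := by
      rw [← exp_mul]
      congr 1
      field_simp

/-- An upper bound for `OPT 1 A A 1 (1/(2Q) + z) (1/(2Q) - z) s` in terms of `Q = Qf s` and `A`,
uniform in `z`; its three factors bound `OPT1`, `OPT2` and `OPT3`. -/
noncomputable def optMajorant (Q A : ℝ) : ℝ :=
  (1 + 2 * exp (-(Q * (1 - A)))) * (1 + A / Q) ^ (-Q) *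
    ((1 + 1 / Q) ^ Q + 2 * exp (-((1 - 1 / Q) / 2)))

lemma OPT_le_optMajorant {s A z : ℝ} (hs : 0 < s) (hA : A ∈ Icc 0 1)
    (hz : |z| ≤ 1 / (2 * Qf s)) :
    OPT 1 A A 1 (1 / (2 * Qf s) + z) (1 / (2 * Qf s) - z) s ≤ optMajorant (Qf s) A := by
  have hQ : 0 < Qf s := hs.trans_le (le_Qf hs)
  have hOPT₁ : (q (s * 1) + q (s * A) + q (s * A)) / q s ≤ 1 + 2 * exp (-(Qf s * (1 - A))) := by
    rw [div_le_iff₀ (q_pos hs.ne'), mul_one]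
    linarith [q_mul_le hs hA]
  have hform_le := one_sub_sq_add_three_mul_sq_rpow_le hQ hz
  unfold OPT optMajorant
  generalize Qf s = Q at *
  have hA₀ : 0 ≤ A := hA.1
  have hinner : 1 * 1 + A * (1 / (2 * Q) + z) + A * (1 / (2 * Q) - z) = 1 + A / Q := by ring
  have hsum : 1 + (1 / (2 * Q) + z) + (1 / (2 * Q) - z) = 1 + 1 / Q := by ring
  have hform : 1 ^ 2 + (1 / (2 * Q) + z) ^ 2 + (1 / (2 * Q) - z) ^ 2 - 1 * (1 / (2 * Q) + z)
      - 1 * (1 / (2 * Q) - z) - (1 / (2 * Q) + z) * (1 / (2 * Q) - z)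
      = (1 - 1 / (2 * Q)) ^ 2 + 3 * z ^ 2 := by ring
  rw [hinner, hsum, hform, one_div (1 + A / Q), inv_rpow (by positivity),
    ← rpow_neg (by positivity)]
  gcongr

lemma convexOn_optMajorant {Q : ℝ} (hQ : 0 ≤ Q) : ConvexOn ℝ (Ici 0) (optMajorant Q) := by
  have hlog : ConvexOn ℝ (Ici 0) fun A ↦ -(Q * log (1 + A / Q)) :=
    ((concaveOn_log_one_add_div hQ).smul hQ).neg
  have hlinear : ConvexOn ℝ (Ici 0) fun A : ℝ ↦ Q * A - Q :=
    ((convexOn_id (convex_Ici 0)).smul hQ).add_const (-Q)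
  have hsum := (convexOn_exp_comp hlog).add
    ((convexOn_exp_comp (hlinear.add hlog)).smul zero_le_two)
  have hOPT₃ : 0 ≤ (1 + 1 / Q) ^ Q + 2 * exp (-((1 - 1 / Q) / 2)) := by positivity
  refine (hsum.smul hOPT₃).congr fun A hA ↦ ?_
  have hA : 0 ≤ A := hA
  have hlinear_eq : -(Q * (1 - A)) = Q * A - Q := by ring
  have hrpow : (1 + A / Q) ^ (-Q) = exp (-(Q * log (1 + A / Q))) := by
    rw [rpow_def_of_pos (by positivity), mul_neg, mul_comm]
  simp only [optMajorant, Pi.add_apply, smul_eq_mul, exp_add, hlinear_eq, hrpow]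
  ring

lemma optMajorant_le {Q A : ℝ} (hQ : 0 < Q) (hA : 0 ≤ A) :
    optMajorant Q A ≤ (1 + 2 * exp (-(Q * (1 - A)))) *
      (exp ((1 - A) / (1 + A / Q)) + 2 * exp (-((1 - 1 / Q) / 2) - A + A ^ 2 / (2 * Q))) := by
  calc optMajorant Q A
      = (1 + 2 * exp (-(Q * (1 - A)))) * (((1 + 1 / Q) / (1 + A / Q)) ^ Q +
          2 * (exp (-((1 - 1 / Q) / 2)) * (1 + A / Q) ^ (-Q))) := by
        rw [optMajorant, div_rpow (by positivity) (by positivity), rpow_neg (by positivity)]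
        ring
    _ ≤ (1 + 2 * exp (-(Q * (1 - A)))) * (exp ((1 - A) / (1 + A / Q)) +
          2 * (exp (-((1 - 1 / Q) / 2)) * exp (-A + A ^ 2 / (2 * Q)))) := by
        gcongr
        · exact one_add_inv_div_one_add_div_rpow_le hQ hA
        · exact one_add_div_rpow_neg_le hQ hA
    _ = _ := by
        rw [← exp_add]
        ring_nf

section Endpoints

variable {Q : ℝ}

lemma optMajorant_seven_div_twenty_le (hQ : 7 ≤ Q) : optMajorant Q (7 / 20) ≤ 2.99 := by
  have hQ₀ : 0 < Q := by linarith
  have hinv : 1 / Q ≤ 1 / 7 := by gcongr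
  have hOPT₁ : exp (-(Q * (1 - 7 / 20))) ≤ 0.0111 := calc
    _ ≤ exp (-((91 : ℕ) / (20 : ℕ))) := exp_le_exp.2 (by push_cast; linarith)
    _ ≤ 0.0111 := exp_neg_natCast_div_le (by norm_num) (by norm_num) (by norm_num)
  have hratio : exp ((1 - 7 / 20) / (1 + 7 / 20 / Q)) ≤ 1.92 := calc
    _ ≤ exp ((13 : ℕ) / (20 : ℕ)) := by
      refine exp_le_exp.2 ((div_le_self (by norm_num) ?_).trans (by norm_num))
      exact le_add_of_nonneg_right (by positivity)
    _ ≤ 1.92 := exp_natCast_div_le (by norm_num) (by norm_num) (by norm_num)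
  have hform : exp (-((1 - 1 / Q) / 2) - 7 / 20 + (7 / 20) ^ 2 / (2 * Q)) ≤ 0.47 := calc
    _ = exp (-(17 / 20) + 449 / 800 * (1 / Q)) := by ring_nf
    _ ≤ exp (-((76 : ℕ) / (100 : ℕ))) := exp_le_exp.2 (by push_cast; linarith)
    _ ≤ 0.47 := exp_neg_natCast_div_le (by norm_num) (by norm_num) (by norm_num)
  calc optMajorant Q (7 / 20) ≤ _ := optMajorant_le hQ₀ (by norm_num)
    _ ≤ (1 + 2 * 0.0111) * (1.92 + 2 * 0.47) := by gcongr
    _ ≤ 2.99 := by norm_num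

lemma optMajorant_one_sub_inv_le (hQ : 7 ≤ Q) : optMajorant Q (1 - 1 / Q) ≤ 2.99 := by
  have hQ₀ : 0 < Q := by linarith
  have hinv : 1 / Q ≤ 1 / 7 := by gcongr
  have hinv₀ : 0 < 1 / Q := by positivity
  have hOPT₁ : exp (-(Q * (1 - (1 - 1 / Q)))) ≤ 0.3679 := calc
    _ = exp (-1) := by rw [sub_sub_cancel, mul_one_div_cancel hQ₀.ne']
    _ ≤ 0.3679 := exp_neg_one_lt_d9.le.trans (by norm_num)
  have hratio : exp ((1 - (1 - 1 / Q)) / (1 + (1 - 1 / Q) / Q)) ≤ 1.136 := calc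
    _ = exp (1 / Q / (1 + (1 - 1 / Q) * (1 / Q))) := by ring_nf
    _ ≤ exp ((7 : ℕ) / (55 : ℕ)) := by
      refine exp_le_exp.2 ?_
      generalize 1 / Q = t at *
      rw [div_le_iff₀ (by nlinarith)]
      push_cast
      nlinarith
    _ ≤ 1.136 := exp_natCast_div_le (by norm_num) (by norm_num) (by norm_num)
  have hform : exp (-((1 - 1 / Q) / 2) - (1 - 1 / Q) + (1 - 1 / Q) ^ 2 / (2 * Q)) ≤ 0.2925 := calc
    _ = exp (-(3 / 2) * (1 - 1 / Q) + (1 - 1 / Q) ^ 2 * (1 / Q) / 2) := by ring_nf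
    _ ≤ exp (-((123 : ℕ) / (100 : ℕ))) := by
      refine exp_le_exp.2 ?_
      generalize 1 / Q = t at *
      push_cast
      nlinarith [mul_nonneg hinv₀.le (sub_nonneg.2 hinv),
        mul_nonneg (sq_nonneg t) (sub_nonneg.2 hinv)]
    _ ≤ 0.2925 := exp_neg_natCast_div_le (by norm_num) (by norm_num) (by norm_num)
  calc optMajorant Q (1 - 1 / Q) ≤ _ := optMajorant_le hQ₀ (by linarith)
    _ ≤ (1 + 2 * 0.3679) * (1.136 + 2 * 0.2925) := by gcongr
    _ ≤ 2.99 := by norm_num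

lemma optMajorant_le_of_mem_Icc {A : ℝ} (hQ : 7 ≤ Q) (hA : A ∈ Icc (7 / 20) (1 - 1 / Q)) :
    optMajorant Q A ≤ 2.99 := by
  have hleft : (7 / 20 : ℝ) ∈ Ici 0 := by norm_num
  have hright : 1 - 1 / Q ∈ Ici 0 := hleft.trans (hA.1.trans hA.2)
  exact ((convexOn_optMajorant (by linarith)).le_max_of_mem_Icc hleft hright hA).trans
    (max_le (optMajorant_seven_div_twenty_le hQ) (optMajorant_one_sub_inv_le hQ))

end Endpoints

theorem stmt7 :
    ∃ δ : ℝ, 0 < δ ∧ ∀ s : ℝ, 7 ≤ s →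
      ∀ A : ℝ, 7/20 ≤ A → A ≤ 1 - 1/(Qf s) →
        ∀ z : ℝ, 0 ≤ z → z ≤ 1/(2 * Qf s) →
          OPT 1 A A 1 (1/(2 * Qf s) + z) (1/(2 * Qf s) - z) s ≤ 3 - δ := by
  refine ⟨0.01, by norm_num, fun s hs A hA hA' z hz hz' ↦ ?_⟩
  have hs₀ : 0 < s := by linarith
  have hQ : 7 ≤ Qf s := hs.trans (le_Qf hs₀)
  have hA₁ : A ≤ 1 := hA'.trans (sub_le_self 1 (by positivity))
  calc OPT 1 A A 1 (1 / (2 * Qf s) + z) (1 / (2 * Qf s) - z) s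
      ≤ optMajorant (Qf s) A :=
        OPT_le_optMajorant hs₀ ⟨by linarith, hA₁⟩ ((abs_of_nonneg hz).trans_le hz')
    _ ≤ 2.99 := optMajorant_le_of_mem_Icc hQ ⟨hA, hA'⟩
    _ = 3 - 0.01 := by norm_num
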